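/- Let H be a graph with p vertices and q edges. If G is a graph with average degree at least 88(p + q), then G contains a subdivision of H. -/

import Mathlib

open scoped BigOperators

/-- The average degree of a graph `G`: `(1/|G|) * sum of degrees`. -/
noncomputable def avgDeg {V : Type*} (G : SimpleGraph V) : Real :=
  (finsum fun v : V => ((G.neighborSet v).ncard : Real)) / (Nat.card V : Real)

/-- `(b, P)` is a subdivision of `H` inside `G`: `b` gives the branch vertices and, for
each edge of `H`, `P` gives a path of `G` between the corresponding branch vertices; the
paths are pairwise internally vertex disjoint and no branch vertex is internal to a path. -/
def IsSubdivOn {V W : Type*} (G : SimpleGraph V) (H : SimpleGraph W)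
    (b : W → V) (P : ∀ ⦃i j : W⦄, H.Adj i j → G.Walk (b i) (b j)) : Prop :=
  Function.Injective b ∧
  (∀ i j (h : H.Adj i j), (P h).IsPath) ∧
  (∀ i j (h : H.Adj i j), P h.symm = (P h).reverse) ∧
  (∀ i j (h : H.Adj i j) (k : W), b k ∈ (P h).support → k = i ∨ k = j) ∧
  (∀ i j (hij : H.Adj i j), ∀ k l (hkl : H.Adj k l), s(i, j) ≠ s(k, l) →
    ∀ v : V, v ∈ (P hij).support → v ∈ (P hkl).support →
      (v = b i ∨ v = b j) ∧ (v = b k ∨ v = b l))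

/-- `G` contains a subdivision of `H`. -/
def HasSubdiv {V W : Type*} (G : SimpleGraph V) (H : SimpleGraph W) : Prop :=
  ∃ (b : W → V) (P : ∀ ⦃i j : W⦄, H.Adj i j → G.Walk (b i) (b j)), IsSubdivOn G H b P

section SubdivAux
open scoped Classical
open Finset Relation

variable {V : Type*} {L : Type*}

/-- number of neighbours of `a` in `S` -/
noncomputable def dg (G : SimpleGraph V) (S : Finset V) (a : V) : ℕ :=
  (S.filter (fun b => G.Adj a b)).card

/-- number of ordered adjacent pairs in `S` -/
noncomputable def e2 (G : SimpleGraph V) (S : Finset V) : ℕ := ∑ a ∈ S, dg G S a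

/-- `(A, B)` is a separation of `U`. -/
structure GSep (G : SimpleGraph V) (U A B : Finset V) : Prop where
  union : A ∪ B = U
  nocross : ∀ a ∈ A, a ∉ B → ∀ b ∈ B, b ∉ A → ¬ G.Adj a b

/-- monochromatic reachability inside `U` -/
def Reach (G : SimpleGraph V) (U : Finset V) (f : V → L) : V → V → Prop :=
  ReflTransGen (fun a b => G.Adj a b ∧ a ∈ U ∧ b ∈ U ∧ f a = f b)

/-- every labelling of `X` extends to one where equal labels are connected -/
def Linked (L : Type*) (G : SimpleGraph V) (U X : Finset V) : Prop :=
  ∀ l : V → L, ∃ f : V → L, (∀ x ∈ X, f x = l x) ∧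
    ∀ x ∈ X, ∀ y ∈ X, l x = l y → Reach G U f x y

/-- disjoint paths from all of `X` to `Z` -/
def Link (G : SimpleGraph V) (U X Z : Finset V) : Prop :=
  ∃ f : V → V, (∀ x ∈ X, f x = x) ∧ ∀ x ∈ X, ∃ z ∈ Z, Reach G U f x z

theorem Reach.label {G : SimpleGraph V} {U : Finset V} {f : V → L} {x y : V}
    (h : Reach G U f x y) : f x = f y := by
  induction h with
  | refl => rfl
  | tail _ h ih => exact ih.trans h.2.2.2

theorem Reach.symm {G : SimpleGraph V} {U : Finset V} {f : V → L} {x y : V}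
    (h : Reach G U f x y) : Reach G U f y x := by
  induction h with
  | refl => exact ReflTransGen.refl
  | tail _ h ih => exact ReflTransGen.head ⟨h.1.symm, h.2.2.1, h.2.1, h.2.2.2.symm⟩ ih

theorem Reach.trans {G : SimpleGraph V} {U : Finset V} {f : V → L} {x y z : V}
    (h : Reach G U f x y) (h' : Reach G U f y z) : Reach G U f x z :=
  ReflTransGen.trans h h'

theorem Reach.step {G : SimpleGraph V} {U : Finset V} {f : V → L} {x y : V}
    (h : G.Adj x y) (hx : x ∈ U) (hy : y ∈ U) (hf : f x = f y) : Reach G U f x y :=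
  ReflTransGen.single ⟨h, hx, hy, hf⟩

/-- transfer of reachability -/
theorem Reach.map {L' : Type*} {G G' : SimpleGraph V} {U U' : Finset V} {f : V → L} {f' : V → L'}
    {x y : V} (h : Reach G U f x y)
    (H : ∀ a b, G.Adj a b → a ∈ U → b ∈ U → f a = f b → f x = f a → Reach G' U' f' a b) :
    Reach G' U' f' x y := by
  induction h with
  | refl => exact ReflTransGen.refl
  | tail h1 h ih =>
    exact ih.trans (H _ _ h.1 h.2.1 h.2.2.1 h.2.2.2 (Reach.label h1))

theorem Linked.mono_set {G : SimpleGraph V} {U X Y : Finset V}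
    (h : Linked L G U X) (hY : Y ⊆ X) : Linked L G U Y := by
  intro l
  obtain ⟨f, h1, h2⟩ := h l
  exact ⟨f, fun x hx => h1 x (hY hx), fun x hx y hy => h2 x (hY hx) y (hY hy)⟩

theorem dg_mono {G G' : SimpleGraph V} {S S' : Finset V} {a : V} (hS : S ⊆ S')
    (h : ∀ b ∈ S, G.Adj a b → G'.Adj a b) : dg G S a ≤ dg G' S' a := by
  apply card_le_card
  intro b hb
  simp only [mem_filter] at *
  exact ⟨hS hb.1, h b hb.1 hb.2⟩

theorem dg_le_card (G : SimpleGraph V) (S : Finset V) (a : V) : dg G S a ≤ S.card :=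
  card_filter_le _ _

theorem dg_union (G : SimpleGraph V) {S T : Finset V} (h : Disjoint S T) (a : V) :
    dg G (S ∪ T) a = dg G S a + dg G T a := by
  unfold dg
  rw [filter_union, card_union_of_disjoint (disjoint_filter_filter h)]

theorem sum_dg_comm (G : SimpleGraph V) (S T : Finset V) :
    ∑ a ∈ S, dg G T a = ∑ t ∈ T, dg G S t := by
  unfold dg
  simp only [card_filter]
  rw [sum_comm]
  simp only [G.adj_comm]

theorem e2_union (G : SimpleGraph V) {S T : Finset V} (h : Disjoint S T) :
    e2 G (S ∪ T) = e2 G S + (e2 G T + 2 * ∑ t ∈ T, dg G S t) := by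
  unfold e2
  rw [sum_union h]
  simp only [dg_union G h, sum_add_distrib]
  rw [sum_dg_comm G S T]
  ring

theorem e2_insert (G : SimpleGraph V) {S : Finset V} {v : V} (h : v ∉ S) :
    e2 G (insert v S) = e2 G S + 2 * dg G S v := by
  have h' : Disjoint S {v} := by simpa using h
  have := e2_union G h'
  rw [insert_eq, union_comm, this]
  simp [e2, dg, filter_singleton]

theorem e2_le (G : SimpleGraph V) (S : Finset V) : e2 G S ≤ S.card * S.card := by
  unfold e2
  calc _ ≤ ∑ a ∈ S, S.card := sum_le_sum fun a _ => dg_le_card G S a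
    _ = _ := by simp

theorem e2_split (G : SimpleGraph V) {S B : Finset V} (h : S ⊆ B) :
    e2 G B = e2 G S + (e2 G (B \ S) + 2 * ∑ t ∈ B \ S, dg G S t) := by
  rw [← e2_union G disjoint_sdiff, union_sdiff_of_subset h]

theorem e2_mono {G : SimpleGraph V} {S B : Finset V} (h : S ⊆ B) : e2 G S ≤ e2 G B := by
  rw [e2_split G h]; omega

theorem e2_mono_graph {G G' : SimpleGraph V} {S : Finset V}
    (h : ∀ a ∈ S, ∀ b ∈ S, G.Adj a b → G'.Adj a b) : e2 G S ≤ e2 G' S :=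
  sum_le_sum fun a ha => dg_mono (Subset.refl _) (h a ha)

theorem e2_sep {G : SimpleGraph V} {U A B : Finset V} (h : GSep G U A B) :
    e2 G U + e2 G (A ∩ B) = e2 G A + e2 G B := by
  have h1 := e2_split G (S := A) (B := U) (by rw [← h.union]; exact subset_union_left)
  have h2 := e2_split G (S := A ∩ B) (B := B) inter_subset_right
  have e1 : U \ A = B \ A := by rw [← h.union]; grind
  have e3 : B \ (A ∩ B) = B \ A := by grind
  rw [e1] at h1
  rw [e3] at h2
  have : ∑ t ∈ B \ A, dg G A t = ∑ t ∈ B \ A, dg G (A ∩ B) t := by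
    apply sum_congr rfl
    intro t ht
    unfold dg
    congr 1
    ext b
    simp only [mem_filter, mem_inter, mem_sdiff] at *
    constructor
    · rintro ⟨hb, hadj⟩
      refine ⟨⟨hb, ?_⟩, hadj⟩
      by_contra hbB
      exact h.nocross b hb hbB t ht.1 ht.2 hadj.symm
    · rintro ⟨⟨hb, _⟩, hadj⟩
      exact ⟨hb, hadj⟩
  omega

theorem card_sep {G : SimpleGraph V} {U A B : Finset V} (h : GSep G U A B) :
    U.card + (A ∩ B).card = A.card + B.card := by
  rw [← h.union]; exact card_union_add_card_inter A B

/-- `B` is dense over `S` -/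
def Viol (k : ℕ) (G : SimpleGraph V) (B S : Finset V) : Prop :=
  e2 G S + 2 * k * B.card < e2 G B + 2 * k * S.card

theorem viol_iff {k : ℕ} {G : SimpleGraph V} {B S : Finset V} (h : S ⊆ B) :
    Viol k G B S ↔ 2 * k * (B \ S).card < e2 G (B \ S) + 2 * ∑ t ∈ B \ S, dg G S t := by
  unfold Viol
  rw [e2_split G h, ← card_sdiff_add_card_eq_card h, mul_add]
  omega

theorem viol_mono {k : ℕ} {G G' : SimpleGraph V} {B S B' S' : Finset V} (h : S ⊆ B) (h' : S' ⊆ B')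
    (hT : B \ S = B' \ S')
    (h1 : ∀ a ∈ B \ S, ∀ b ∈ B \ S, G.Adj a b → G'.Adj a b)
    (h2 : ∀ a ∈ B \ S, dg G S a ≤ dg G' S' a) (hv : Viol k G B S) : Viol k G' B' S' := by
  rw [viol_iff h] at hv
  rw [viol_iff h', ← hT]
  have := e2_mono_graph h1
  have := sum_le_sum h2
  omega

theorem Viol.ssubset {k : ℕ} {G : SimpleGraph V} {A B : Finset V} (hv : Viol k G B (A ∩ B)) :
    ¬ B ⊆ A := by
  intro h
  rw [inter_eq_right.2 h] at hv
  unfold Viol at hv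
  omega
theorem exists_split_edge {G : SimpleGraph V} {U A B : Finset V} {x y : V}
    (h : GSep (G.deleteEdges {s(x, y)}) U A B) (hn : ¬ GSep G U A B) :
    ∃ a b, a ∈ A ∧ a ∉ B ∧ b ∈ B ∧ b ∉ A ∧ G.Adj a b ∧ s(a, b) = s(x, y) := by
  by_contra hc
  push Not at hc
  apply hn
  refine ⟨h.union, fun a ha ha' b hb hb' hadj => ?_⟩
  apply h.nocross a ha ha' b hb hb'
  rw [SimpleGraph.deleteEdges_adj]
  exact ⟨hadj, fun h => hc a b ha ha' hb hb' hadj h⟩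

theorem e2_delete_lt {G : SimpleGraph V} {U : Finset V} {x y : V} (hx : x ∈ U) (hy : y ∈ U)
    (h : G.Adj x y) : e2 (G.deleteEdges {s(x, y)}) U < e2 G U := by
  unfold e2
  apply sum_lt_sum
  · intro a _
    exact dg_mono (Subset.refl _) (fun b _ hb => (SimpleGraph.deleteEdges_le _) hb)
  · refine ⟨x, hx, ?_⟩
    apply card_lt_card
    rw [ssubset_iff_of_subset]
    · exact ⟨y, by simp [h, hy], by simp⟩
    · intro b hb
      simp only [mem_filter] at *
      exact ⟨hb.1, (SimpleGraph.deleteEdges_le _) hb.2⟩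

theorem menger : ∀ (n : ℕ) (G : SimpleGraph V) (U X Z : Finset V), X ⊆ U → Z ⊆ U → e2 G U ≤ n →
    (∀ A B, GSep G U A B → X ⊆ A → Z ⊆ B → X.card ≤ (A ∩ B).card) → Link G U X Z := by
  intro n
  induction n with
  | zero =>
    intro G U X Z hX hZ he hcut
    have hno : ∀ a ∈ U, ∀ b ∈ U, ¬ G.Adj a b := by
      intro a ha b hb hab
      have := e2_delete_lt ha hb hab
      omega
    have := hcut X ((U \ X) ∪ Z) ⟨by grind, by grind⟩ (Subset.refl _) subset_union_right
    have e : X ∩ ((U \ X) ∪ Z) = X ∩ Z := by grind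
    rw [e] at this
    have hXZ : X ∩ Z = X := eq_of_subset_of_card_le inter_subset_left this
    exact ⟨id, fun _ _ => rfl, fun x hx => ⟨x, by grind, ReflTransGen.refl⟩⟩
  | succ n ih =>
    intro G U X Z hX hZ he hcut
    by_cases hno : ∀ a ∈ U, ∀ b ∈ U, ¬ G.Adj a b
    · apply ih G U X Z hX hZ _ hcut
      have : e2 G U = 0 := by
        unfold e2 dg
        apply sum_eq_zero
        intro a ha
        rw [card_eq_zero, filter_eq_empty_iff]
        intro b hb; exact hno a ha b hb
      omega
    push Not at hno
    obtain ⟨x, hx, y, hy, hxy⟩ := hno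
    have hlt := e2_delete_lt hx hy hxy
    by_cases hc : ∀ A B, GSep (G.deleteEdges {s(x, y)}) U A B → X ⊆ A → Z ⊆ B →
        X.card ≤ (A ∩ B).card
    · obtain ⟨f, h1, h2⟩ := ih _ U X Z hX hZ (by omega) hc
      refine ⟨f, h1, fun x hx => ?_⟩
      obtain ⟨z, hz, hr⟩ := h2 x hx
      exact ⟨z, hz, hr.map fun a b hab ha hb hf _ =>
        Reach.step (SimpleGraph.deleteEdges_le _ hab) ha hb hf⟩
    push Not at hc
    obtain ⟨A, B, hs, hXA, hZB, hlt'⟩ := hc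
    have hns : ¬ GSep G U A B := fun h => by have := hcut A B h hXA hZB; omega
    obtain ⟨a, b, haA, haB, hbB, hbA, hab, hse⟩ := exists_split_edge hs hns
    have hcross : ∀ p ∈ A, p ∉ B → ∀ q ∈ B, q ∉ A → G.Adj p q → p = a ∧ q = b := by
      intro p hp hp' q hq hq' hpq
      by_contra hne
      apply hs.nocross p hp hp' q hq hq'
      rw [SimpleGraph.deleteEdges_adj]
      refine ⟨hpq, fun h => ?_⟩
      rw [Set.mem_singleton_iff, ← hse, Sym2.eq_iff] at h
      rcases h with h | h
      · exact hne h
      · exact hbA (h.1 ▸ hp)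
    have hU := hs.union
    have hAU : A ⊆ U := by rw [← hU]; exact subset_union_left
    have hBU : B ⊆ U := by rw [← hU]; exact subset_union_right
    have hsa : X.card ≤ (insert a (A ∩ B)).card := by
      have := hcut A (insert a B) ⟨by grind, by grind⟩ hXA (by grind)
      have e : A ∩ insert a B = insert a (A ∩ B) := by grind
      rwa [e] at this
    have ha' : a ∉ A ∩ B := by grind
    have hb' : b ∉ A ∩ B := by grind
    rw [card_insert_of_notMem ha'] at hsa
    have hA : e2 G A ≤ n := by
      have h1 := e2_split G (insert_subset (hBU hbB) hAU)
      have h2 := e2_insert G hbA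
      have h3 : 0 < dg G A b := card_pos.2 ⟨a, by simp [haA, hab.symm]⟩
      omega
    have hB : e2 G B ≤ n := by
      have h1 := e2_split G (insert_subset (hAU haA) hBU)
      have h2 := e2_insert G haB
      have h3 : 0 < dg G B a := card_pos.2 ⟨b, by simp [hbB, hab]⟩
      omega
    obtain ⟨f1, h11, h12⟩ := ih G A X (insert a (A ∩ B)) hXA (by grind) hA (by
      intro A1 B1 hs1 hX1 hZ1
      have hu := hs1.union
      have := hcut A1 (B1 ∪ B) ⟨by grind, by
        intro p hp hp' q hq hq' hpq
        by_cases hqB : q ∈ B1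
        · exact hs1.nocross p hp (by grind) q hqB hq' hpq
        · have := hcross p (by grind) (by grind) q (by grind) (by grind) hpq
          grind⟩ hX1 (by grind)
      have e : A1 ∩ (B1 ∪ B) = A1 ∩ B1 := by grind
      rwa [e] at this)
    obtain ⟨f2, h21, h22⟩ := ih G B (insert b (A ∩ B)) Z (by grind) hZB hB (by
      intro A1 B1 hs1 hX1 hZ1
      have hu := hs1.union
      have := hcut (A ∪ A1) B1 ⟨by grind, by
        intro p hp hp' q hq hq' hpq
        by_cases hqB : p ∈ A1
        · exact hs1.nocross p hqB hp' q hq (by grind) hpq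
        · have := hcross p (by grind) (by grind) q (by grind) (by grind) hpq
          grind⟩ (by grind) hZ1
      have e : (A ∪ A1) ∩ B1 = A1 ∩ B1 := by grind
      rw [e] at this
      rw [card_insert_of_notMem hb']
      omega)
    let g : V → V := fun s => if s = b then f1 a else f1 s
    let f : V → V := fun v => if v ∈ A then f1 v else g (f2 v)
    have hfA : ∀ v ∈ A, f v = f1 v := fun v hv => by simp [f, hv]
    have hfB : ∀ v ∈ B, f v = g (f2 v) := by
      intro v hv
      by_cases hvA : v ∈ A
      · have hvS : v ∈ A ∩ B := by grind
        have : f2 v = v := h21 v (by grind)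
        have hne : v ≠ b := by grind
        simp [f, hvA, this, g, hne]
      · simp [f, hvA]
    refine ⟨f, fun x hx => by rw [hfA x (hXA hx), h11 x hx], fun x hx => ?_⟩
    obtain ⟨s, hs1, hr1⟩ := h12 x hx
    have hr1' : Reach G U f x s := hr1.map fun p q hpq hp hq hf _ =>
      Reach.step hpq (hAU hp) (hAU hq) (by rw [hfA p hp, hfA q hq, hf])
    have key : ∀ s ∈ insert b (A ∩ B), ∃ z ∈ Z, Reach G U f s z := by
      intro s hs
      obtain ⟨z, hz, hr⟩ := h22 s hs
      exact ⟨z, hz, hr.map fun p q hpq hp hq hf _ =>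
        Reach.step hpq (hBU hp) (hBU hq) (by rw [hfB p hp, hfB q hq, hf])⟩
    rcases mem_insert.1 hs1 with rfl | hs1
    · obtain ⟨z, hz, hr⟩ := key b (by grind)
      refine ⟨z, hz, hr1'.trans ((Reach.step hab (hAU haA) (hBU hbB) ?_).trans hr)⟩
      rw [hfA _ haA, hfB _ hbB, h21 b (by grind)]
      simp [g]
    · obtain ⟨z, hz, hr⟩ := key s (by grind)
      exact ⟨z, hz, hr1'.trans hr⟩

/-- first entry into `Z` -/
theorem Reach.first {G : SimpleGraph V} {U Z : Finset V} {f : V → L} {x z : V}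
    (h : Reach G U f x z) (hz : z ∈ Z) :
    ∃ z' ∈ Z, f x = f z' ∧ (x ∈ Z → z' = x) ∧ ReflTransGen
      (fun a b => G.Adj a b ∧ a ∈ U ∧ b ∈ U ∧ f a = f b ∧ a ∉ Z) x z' := by
  induction h using ReflTransGen.head_induction_on with
  | refl => exact ⟨z, hz, rfl, fun _ => rfl, ReflTransGen.refl⟩
  | head h1 h2 ih =>
    rename_i a c
    by_cases ha : a ∈ Z
    · exact ⟨a, ha, rfl, fun _ => rfl, ReflTransGen.refl⟩
    · obtain ⟨z', hz', hf, _, hr⟩ := ih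
      exact ⟨z', hz', h1.2.2.2.trans hf, fun h => (ha h).elim,
        ReflTransGen.head ⟨h1.1, h1.2.1, h1.2.2.1, h1.2.2.2, ha⟩ hr⟩

theorem Linked.compose {G : SimpleGraph V} {A B X : Finset V}
    (h1 : Link G A X (A ∩ B))
    (h2 : ∀ Y, Y ⊆ A ∩ B → Y.card ≤ X.card → Linked L G B Y) : Linked L G (A ∪ B) X := by
  intro l
  obtain ⟨f1, hf1, hr1⟩ := h1
  have : ∀ x ∈ X, ∃ z ∈ A ∩ B, f1 x = f1 z ∧ (x ∈ A ∩ B → z = x) ∧ ReflTransGen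
      (fun a b => G.Adj a b ∧ a ∈ A ∧ b ∈ A ∧ f1 a = f1 b ∧ a ∉ A ∩ B) x z := by
    intro x hx
    obtain ⟨z, hz, hr⟩ := hr1 x hx
    exact hr.first hz
  choose! z hz hfz hzx hrz using this
  obtain ⟨f2, hf2, hr2⟩ := h2 (X.image z) (by
    intro y hy
    obtain ⟨x, hx, rfl⟩ := mem_image.1 hy
    exact hz x hx) card_image_le (fun v => l (f1 v))
  let f : V → L := fun v => if v ∈ B then f2 v else l (f1 v)
  have hfB : ∀ v ∈ B, f v = f2 v := fun v hv => by simp [f, hv]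
  have hfA : ∀ v, v ∉ B → f v = l (f1 v) := fun v hv => by simp [f, hv]
  have hfz2 : ∀ x ∈ X, f (z x) = l x := by
    intro x hx
    rw [hfB _ (mem_inter.1 (hz x hx)).2, hf2 _ (mem_image_of_mem _ hx), ← hfz x hx, hf1 x hx]
  have aux : ∀ x w, f w = l x → f1 w = x → ∀ a, ReflTransGen
      (fun a b => G.Adj a b ∧ a ∈ A ∧ b ∈ A ∧ f1 a = f1 b ∧ a ∉ A ∩ B) a w →
      f1 a = x ∧ f a = l x ∧ Reach G (A ∪ B) f a w := by
    intro x w hfw hw a hr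
    induction hr using ReflTransGen.head_induction_on with
    | refl => exact ⟨hw, hfw, ReflTransGen.refl⟩
    | head h1 h2 ih =>
      rename_i a c
      have haB : a ∉ B := by grind
      have h3 : f1 a = x := h1.2.2.2.1.trans ih.1
      have h4 : f a = l x := by rw [hfA a haB, h3]
      exact ⟨h3, h4, (Reach.step h1.1 (by grind) (by grind) (h4.trans ih.2.1.symm)).trans ih.2.2⟩
  have hxz : ∀ x ∈ X, f x = l x ∧ Reach G (A ∪ B) f x (z x) := fun x hx =>
    (aux x (z x) (hfz2 x hx) ((hfz x hx).symm.trans (hf1 x hx)) x (hrz x hx)).2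
  refine ⟨f, fun x hx => (hxz x hx).1, fun x hx y hy hxy => ?_⟩
  refine (hxz x hx).2.trans (Reach.trans ?_ (hxz y hy).2.symm)
  have := hr2 (z x) (mem_image_of_mem _ hx) (z y) (mem_image_of_mem _ hy) (by
    rw [← hfz x hx, ← hfz y hy, hf1 x hx, hf1 y hy, hxy])
  exact this.map fun p q hpq hp hq hf _ =>
    Reach.step hpq (mem_union_right _ hp) (mem_union_right _ hq) (by rw [hfB p hp, hfB q hq, hf])

/-- a minimum separation between `X` and `Z` -/
theorem exists_min_cut {G : SimpleGraph V} {U X Z : Finset V} (hX : X ⊆ U) (hZ : Z ⊆ U) :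
    ∃ A B, GSep G U A B ∧ X ⊆ A ∧ Z ⊆ B ∧ Link G B (A ∩ B) Z ∧
      ∀ A' B', GSep G U A' B' → X ⊆ A' → Z ⊆ B' → (A ∩ B).card ≤ (A' ∩ B').card := by
  let P : ℕ → Prop := fun n => ∃ A B, GSep G U A B ∧ X ⊆ A ∧ Z ⊆ B ∧ (A ∩ B).card = n
  have hP : ∃ n, P n := ⟨_, X, U, ⟨by grind, by grind⟩, Subset.refl _, hZ, rfl⟩
  obtain ⟨A, B, hs, hXA, hZB, hc⟩ := Nat.find_spec hP
  have hmin : ∀ A' B', GSep G U A' B' → X ⊆ A' → Z ⊆ B' → (A ∩ B).card ≤ (A' ∩ B').card := by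
    intro A' B' h1 h2 h3
    rw [hc]
    exact Nat.find_min' hP ⟨A', B', h1, h2, h3, rfl⟩
  refine ⟨A, B, hs, hXA, hZB, ?_, hmin⟩
  apply menger _ G B (A ∩ B) Z inter_subset_right hZB le_rfl
  intro A1 B1 hs1 h1 h2
  have hu := hs.union
  have hu1 := hs1.union
  have hc := hs.nocross
  have hc1 := hs1.nocross
  have := hmin (A ∪ A1) B1 ⟨by grind, by grind⟩ (by grind) h2
  have e : (A ∪ A1) ∩ B1 = A1 ∩ B1 := by grind
  rwa [e] at this

/-- robust connectivity of a set by short paths -/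
def Robust (m : ℕ) (G : SimpleGraph V) (D : Finset V) : Prop :=
  ∀ J, J ⊆ D → J.card ≤ 5 * m → ∀ x ∈ J, ∀ y ∈ J, x ≠ y →
    ∃ Q, Q ⊆ D \ J ∧ Q.card ≤ 4 ∧ Reach G (insert x (insert y Q)) (fun _ => ()) x y

theorem Robust.linked {m : ℕ} {G : SimpleGraph V} {D X : Finset V} (h : Robust m G D)
    (hX : X ⊆ D) (hm : X.card ≤ m) : Linked L G D X := by
  intro l
  have key : ∀ P : Finset V, P ⊆ X → ∃ (f : V → L) (J : Finset V), X ⊆ J ∧ J ⊆ D ∧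
      J.card ≤ X.card + 4 * P.card ∧ (∀ x ∈ X, f x = l x) ∧
      ∀ x ∈ P, ∀ y ∈ P, l x = l y → Reach G J f x y := by
    intro P
    induction P using Finset.induction_on with
    | empty => intro _; exact ⟨l, X, Subset.refl _, hX, by simp, fun _ _ => rfl, by simp⟩
    | insert z P hz ih =>
      intro hP
      obtain ⟨f, J, hXJ, hJD, hJ, hf, hr⟩ := ih (by grind)
      rw [card_insert_of_notMem hz]
      by_cases hex : ∃ y ∈ P, l y = l z
      · obtain ⟨y, hy, hyz⟩ := hex
        have hPc : P.card ≤ X.card := card_le_card (by grind)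
        have hyX : y ∈ X := by grind
        have hzX : z ∈ X := by grind
        obtain ⟨Q, hQ, hQ4, hQr⟩ := h J hJD (by omega) z (by grind) y (by grind) (by grind)
        let f' : V → L := fun v => if v ∈ Q then l z else f v
        have hfJ : ∀ v ∈ J, f' v = f v := fun v hv => by
          have : v ∉ Q := by grind
          simp [f', this]
        have hfQ : ∀ v ∈ insert z (insert y Q), f' v = l z := by
          intro v hv
          by_cases hvQ : v ∈ Q
          · simp [f', hvQ]
          · have hv' : v = z ∨ v = y := by grind
            rcases hv' with rfl | rfl
            · rw [hfJ _ (by grind), hf _ hzX]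
            · rw [hfJ _ (by grind), hf _ hyX, hyz]
        have hr' : ∀ x ∈ P, ∀ y ∈ P, l x = l y → Reach G (J ∪ Q) f' x y := by
          intro x hx y hy hxy
          exact (hr x hx y hy hxy).map fun p q hpq hp hq hf _ =>
            Reach.step hpq (mem_union_left _ hp) (mem_union_left _ hq)
              (by rw [hfJ p hp, hfJ q hq, hf])
        have hzy : Reach G (J ∪ Q) f' z y := hQr.map fun p q hpq hp hq _ _ =>
            Reach.step hpq (by grind) (by grind) (by rw [hfQ p hp, hfQ q hq])
        refine ⟨f', J ∪ Q, by grind, by grind, ?_, ?_, ?_⟩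
        · have := card_union_le J Q
          omega
        · intro x hx
          rw [hfJ x (hXJ hx), hf x hx]
        · have hz' : ∀ w ∈ P, l w = l z → Reach G (J ∪ Q) f' z w := fun w hw hwz =>
            hzy.trans (hr' y hy w hw (hyz.trans hwz.symm))
          intro a ha b hb hab
          rcases mem_insert.1 ha with rfl | ha1 <;> rcases mem_insert.1 hb with rfl | hb1
          · exact ReflTransGen.refl
          · exact hz' b hb1 hab.symm
          · exact (hz' a ha1 hab).symm
          · exact hr' a ha1 b hb1 hab
      · push Not at hex
        refine ⟨f, J, hXJ, hJD, by omega, hf, ?_⟩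
        intro a ha b hb hab
        rcases mem_insert.1 ha with rfl | ha1 <;> rcases mem_insert.1 hb with rfl | hb1
        · exact ReflTransGen.refl
        · exact (hex b hb1 hab.symm).elim
        · exact (hex a ha1 hab).elim
        · exact hr a ha1 b hb1 hab
  obtain ⟨f, J, _, hJD, _, hf, hr⟩ := key X (Subset.refl _)
  exact ⟨f, hf, fun x hx y hy hxy => (hr x hx y hy hxy).map fun p q hpq hp hq hf _ =>
            Reach.step hpq (hJD hp) (hJD hq) hf⟩

/-- dense small sets are robust -/
theorem robust_of_dense {m : ℕ} {G : SimpleGraph V} {C : Finset V} (h1 : C.card ≤ 20 * m + 1)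
    (h2 : ∀ x ∈ C, 14 * m + 1 ≤ dg G C x) : Robust m G C := by
  intro J hJ hJm x hx y hy hxy
  have hx' := h2 x (hJ hx)
  have hy' := h2 y (hJ hy)
  change _ ≤ (C.filter (G.Adj x)).card at hx'
  change _ ≤ (C.filter (G.Adj y)).card at hy'
  have h3 := card_union_add_card_inter (C.filter (G.Adj x)) (C.filter (G.Adj y))
  have h4 : (C.filter (G.Adj x) ∪ C.filter (G.Adj y)).card ≤ C.card := card_le_card (by grind)
  obtain ⟨q, hq, hqJ⟩ := exists_mem_notMem_of_card_lt_card
    (s := J) (t := C.filter (G.Adj x) ∩ C.filter (G.Adj y)) (by omega)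
  simp only [mem_inter, mem_filter] at hq
  refine ⟨{q}, by grind, by simp, ?_⟩
  exact (Reach.step hq.1.2 (by simp) (by simp) rfl).trans
    (Reach.step hq.2.2.symm (by simp) (by simp) rfl)

theorem dg_sdiff (G : SimpleGraph V) {D J : Finset V} (x : V) :
    dg G D x ≤ dg G (D \ J) x + J.card := by
  have h : D ⊆ (D \ J) ∪ J := by grind
  calc dg G D x ≤ dg G ((D \ J) ∪ J) x := dg_mono h (fun _ _ h => h)
    _ = dg G (D \ J) x + dg G J x := dg_union G sdiff_disjoint x
    _ ≤ _ := by have := dg_le_card G J x; omega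

theorem exists_robust {m : ℕ} (hm : 1 ≤ m) {G : SimpleGraph V} {D : Finset V} (hne : D.Nonempty)
    (h1 : D.card ≤ 40 * m + 3) (h2 : ∀ x ∈ D, 19 * m + 1 ≤ dg G D x) :
    ∃ D', D' ⊆ D ∧ m < D'.card ∧ Robust m G D' := by
  by_cases hR : Robust m G D
  · refine ⟨D, Subset.refl _, ?_, hR⟩
    obtain ⟨x, hx⟩ := hne
    have := h2 x hx
    have := dg_le_card G D x
    omega
  unfold Robust at hR
  push Not at hR
  obtain ⟨J, hJ, hJm, x, hx, y, hy, hxy, hQ⟩ := hR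
  set K := D \ J with hK
  have hdeg : ∀ z ∈ D, 14 * m + 1 ≤ dg G K z := by
    intro z hz
    have := h2 z hz
    have := dg_sdiff G (D := D) (J := J) z
    rw [← hK] at this
    omega
  have hKD : K ⊆ D := by grind
  -- the two neighbourhoods of radius two
  let N : V → Finset V := fun z => K.filter (G.Adj z)
  have hN : ∀ z ∈ D, 14 * m + 1 ≤ (N z).card := hdeg
  let T : V → Finset V := fun w => K.filter (fun z => z ∈ N w ∨ ∃ s ∈ N w, G.Adj s z)
  -- short paths
  have path4 : ∀ s z z' s', s ∈ N x → z ∈ K → z' ∈ K → s' ∈ N y → (s = z ∨ G.Adj s z) →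
      (z = z' ∨ G.Adj z z') → (z' = s' ∨ G.Adj z' s') → False := by
    intro s z z' s' hs hz hz' hs' e1 e2 e3
    simp only [N, mem_filter] at hs hs'
    refine hQ {s, z, z', s'} (by intro w hw; simp only [mem_insert, mem_singleton] at hw; rcases hw with rfl|rfl|rfl|rfl; exacts [hs.1, hz, hz', hs'.1]) card_le_four ?_
    have st : ∀ (R : Finset V) (a b : V), (a = b ∨ G.Adj a b) → a ∈ R → b ∈ R →
        Reach G R (fun _ => ()) a b := by
      intro R a b hab ha hb
      rcases hab with rfl | hab
      · exact ReflTransGen.refl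
      · exact Reach.step hab ha hb rfl
    exact (st _ x s (Or.inr hs.2) (by simp) (by simp)).trans <|
      (st _ s z e1 (by simp) (by simp)).trans <| (st _ z z' e2 (by simp) (by simp)).trans <|
      (st _ z' s' e3 (by simp) (by simp)).trans (st _ s' y (Or.inr hs'.2.symm) (by simp) (by simp))
  have hTT : ∀ z ∈ T x, ∀ z' ∈ T y, ¬ (z = z' ∨ G.Adj z z') := by
    intro z hz z' hz' hzz
    simp only [T, mem_filter] at hz hz'
    have ⟨s, hs, e1⟩ : ∃ s ∈ N x, s = z ∨ G.Adj s z := by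
      rcases hz.2 with h | ⟨s, hs, h⟩
      · exact ⟨z, h, Or.inl rfl⟩
      · exact ⟨s, hs, Or.inr h⟩
    have ⟨s', hs', e3⟩ : ∃ s ∈ N y, z' = s ∨ G.Adj z' s := by
      rcases hz'.2 with h | ⟨s, hs, h⟩
      · exact ⟨z', h, Or.inl rfl⟩
      · exact ⟨s, hs, Or.inr h.symm⟩
    exact path4 s z z' s' hs hz.1 hz'.1 hs' e1 hzz e3
  have hNT : ∀ w, N w ⊆ T w := by intro w z hz; simp only [T, N, mem_filter] at *; grind
  have hclosed : ∀ z ∈ T x, ∀ w ∈ K, G.Adj z w → w ∈ T x := by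
    intro z hz w hw hzw
    by_contra hwT
    have hwT' : w ∉ T y := fun h => hTT z hz w h (Or.inr hzw)
    have d1 : Disjoint (N x) (N y) := by
      rw [disjoint_left]
      intro a ha hb
      exact hTT a (hNT _ ha) a (hNT _ hb) (Or.inl rfl)
    have dd : ∀ u, w ∉ T u → Disjoint (N u) (N w) := by
      intro u hu
      rw [disjoint_left]
      intro a ha hb
      apply hu
      simp only [T, mem_filter]
      simp only [N, mem_filter] at hb
      exact ⟨hw, Or.inr ⟨a, ha, hb.2.symm⟩⟩
    have d2 := dd x hwT
    have d3 := dd y hwT'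
    have c1 := card_union_of_disjoint d1
    have c2 := card_union_of_disjoint (disjoint_union_left.2 ⟨d2, d3⟩)
    have c3 : (N x ∪ N y ∪ N w).card ≤ D.card := card_le_card (by grind)
    have := hN x (hJ hx)
    have := hN y (hJ hy)
    have := hN w (hKD hw)
    omega
  have hTK : T x ⊆ K := filter_subset _ _
  -- each closed part is fine if small
  have fin : ∀ C, C ⊆ K → C.Nonempty → 2 * C.card ≤ K.card →
      (∀ z ∈ C, ∀ w ∈ K, G.Adj z w → w ∈ C) → ∃ D', D' ⊆ D ∧ m < D'.card ∧ Robust m G D' := by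
    intro C hC hne hcard hcl
    have hKc : K.card ≤ D.card := card_le_card hKD
    have hd : ∀ z ∈ C, 14 * m + 1 ≤ dg G C z := by
      intro z hz
      refine (hdeg z (hKD (hC hz))).trans (card_le_card ?_)
      intro w hw
      simp only [mem_filter] at *
      exact ⟨hcl z hz w hw.1 hw.2, hw.2⟩
    refine ⟨C, hC.trans hKD, ?_, robust_of_dense (by omega) hd⟩
    obtain ⟨z, hz⟩ := hne
    have := hd z hz
    have := dg_le_card G C z
    omega
  have hsum := card_sdiff_add_card_eq_card hTK
  have nonx : (N x).Nonempty := card_pos.1 (by have := hN x (hJ hx); omega)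
  have nony : (N y).Nonempty := card_pos.1 (by have := hN y (hJ hy); omega)
  by_cases hlt : 2 * (T x).card ≤ K.card
  · exact fin (T x) hTK (nonx.mono (hNT x)) hlt hclosed
  · refine fin (K \ T x) sdiff_subset ?_ (by omega) ?_
    · obtain ⟨b, hb⟩ := nony
      refine ⟨b, mem_sdiff.2 ⟨(mem_filter.1 hb).1, fun h => ?_⟩⟩
      exact hTT b h b (hNT y hb) (Or.inl rfl)
    · intro z hz w hw hzw
      simp only [mem_sdiff] at *
      exact ⟨hw, fun h => hz.2 (hclosed w h z hz.1 hzw.symm)⟩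
/-- no small dense part is cut off -/
def M2 (k : ℕ) (G : SimpleGraph V) (U X : Finset V) : Prop :=
  ∀ A B, GSep G U A B → X ⊆ A → (A ∩ B).card < X.card → ¬ Viol k G B (A ∩ B)

theorem GSep.sub {G : SimpleGraph V} {U A B A' B' : Finset V} (hs : GSep G U A B)
    (hs' : GSep G B A' B') (h : A ∩ B ⊆ A') :
    GSep G U (A ∪ A') B' ∧ (A ∪ A') ∩ B' = A' ∩ B' := by
  have hu := hs.union
  have hu' := hs'.union
  refine ⟨⟨by grind, ?_⟩, by grind⟩
  intro a ha ha' b hb hb'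
  by_cases haA : a ∈ A'
  · exact hs'.nocross a haA ha' b hb (by grind)
  · exact hs.nocross a (by grind) (by grind) b (by grind) (by grind)

theorem M2.inherit {k : ℕ} {G : SimpleGraph V} {U X A B : Finset V} (h : M2 k G U X)
    (hs : GSep G U A B) (hX : X ⊆ A) (hc : (A ∩ B).card ≤ X.card) : M2 k G B (A ∩ B) := by
  intro A' B' hs' h1 h2 hv
  obtain ⟨g, e⟩ := hs.sub hs' h1
  refine h (A ∪ A') B' g (by grind) ?_ ?_
  · rw [e]; omega
  · rwa [e]

theorem exists_min_viol {k : ℕ} {G : SimpleGraph V} {U X : Finset V} (h : ¬ M2 k G U X) :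
    ∃ A B, GSep G U A B ∧ X ⊆ A ∧ (A ∩ B).card < X.card ∧ Viol k G B (A ∩ B) ∧
      M2 k G B (A ∩ B) := by
  unfold M2 at h
  push Not at h
  let P : ℕ → Prop := fun n => ∃ A B, GSep G U A B ∧ X ⊆ A ∧ (A ∩ B).card < X.card ∧
    Viol k G B (A ∩ B) ∧ B.card = n
  have hP : ∃ n, P n := by
    obtain ⟨A, B, h1, h2, h3, h4⟩ := h
    exact ⟨_, A, B, h1, h2, h3, h4, rfl⟩
  obtain ⟨A, B, h1, h2, h3, h4, hc⟩ := Nat.find_spec hP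
  refine ⟨A, B, h1, h2, h3, h4, ?_⟩
  intro A' B' hs' h5 h6 hv
  obtain ⟨g, e⟩ := h1.sub hs' h5
  have hmin := Nat.find_min' hP ⟨A ∪ A', B', g, by grind, by rw [e]; omega, by rwa [e], rfl⟩
  rw [← hc] at hmin
  have hu' := hs'.union
  have hB : B' = B := eq_of_subset_of_card_le (by grind) hmin
  have : A ∩ B ⊆ A' ∩ B' := by grind
  have := card_le_card this
  omega

/-- add a clique on `S` -/
def withClique (G : SimpleGraph V) (S : Finset V) : SimpleGraph V where
  Adj a b := G.Adj a b ∨ (a ≠ b ∧ a ∈ S ∧ b ∈ S)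
  symm := ⟨fun a b h => h.elim (fun h => Or.inl h.symm) fun h => Or.inr ⟨h.1.symm, h.2.2, h.2.1⟩⟩
  loopless := ⟨fun a h => h.elim (fun h => G.loopless.irrefl a h) fun h => h.1 rfl⟩

theorem Linked.replace {G : SimpleGraph V} {S C B X : Finset V} (h : Linked L (withClique G S) C X)
    (hB : Linked L G B S) (hCB : C ∩ B ⊆ S) (hX : X ⊆ C) : Linked L G (C ∪ B) X := by
  intro l
  obtain ⟨f', hf', hr'⟩ := h l
  obtain ⟨g, hg, hgr⟩ := hB f'
  let f : V → L := fun v => if v ∈ C then f' v else g v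
  have fC : ∀ v ∈ C, f v = f' v := fun v hv => by simp [f, hv]
  have fB : ∀ v ∈ B, f v = g v := fun v hv => by
    by_cases hC : v ∈ C
    · rw [fC v hC, hg v (hCB (mem_inter.2 ⟨hC, hv⟩))]
    · simp [f, hC]
  refine ⟨f, fun x hx => by rw [fC x (hX hx), hf' x hx], ?_⟩
  intro x hx y hy hxy
  refine (hr' x hx y hy hxy).map ?_
  intro a b hab ha hb hfab _
  rcases hab with hab | ⟨_, haS, hbS⟩
  · exact Reach.step hab (mem_union_left _ ha) (mem_union_left _ hb) (by rw [fC a ha, fC b hb, hfab])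
  · exact (hgr a haS b hbS hfab).map fun p q hpq hp hq hgpq _ =>
      Reach.step hpq (mem_union_right _ hp) (mem_union_right _ hq) (by rw [fB p hp, fB q hq, hgpq])

/-- the statement of the main theorem -/
def Good (L : Type*) (m : ℕ) (G : SimpleGraph V) (U X : Finset V) : Prop :=
  X ⊆ U → X.card ≤ m → Viol (20 * m) G U X → M2 (20 * m) G U X → Linked L G U X

theorem no_rigid {m : ℕ} {G : SimpleGraph V} {U X : Finset V}
    (IH : ∀ (G' : SimpleGraph V) (U' X' : Finset V), U'.card < U.card → Good L m G' U' X')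
    (hm : X.card ≤ m) (hV : Viol (20 * m) G U X) (hM : M2 (20 * m) G U X)
    (hn : ¬ Linked L G U X) : ∀ (n : ℕ) (A B : Finset V), A.card ≤ n → GSep G U A B → X ⊆ A →
      (A ∩ B).card ≤ X.card → A ≠ U → Linked L G B (A ∩ B) → False := by
  intro n
  induction n using Nat.strong_induction_on with
  | _ n ih =>
  intro A B hAn hs hXA hc hAU hL
  have hu := hs.union
  have hAs : A ⊂ U := Finset.ssubset_iff_subset_ne.2 ⟨by grind, hAU⟩
  have hAc : A.card < U.card := card_lt_card hAs
  rcases lt_or_eq_of_le hc with hlt | heq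
  · have hnv := hM A B hs hXA hlt
    have v1 : Viol (20 * m) G A X := by
      have e1 := e2_sep hs
      have e3 : 2 * (20 * m) * (U.card + (A ∩ B).card) = 2 * (20 * m) * (A.card + B.card) := by
        rw [card_sep hs]
      rw [mul_add, mul_add] at e3
      unfold Viol at *
      omega
    have v2 : Viol (20 * m) (withClique G (A ∩ B)) A X := by
      refine viol_mono hXA hXA rfl (fun a _ b _ h => Or.inl h) ?_ v1
      exact fun a _ => dg_mono (Subset.refl _) (fun b _ h => Or.inl h)
    by_cases hM' : M2 (20 * m) (withClique G (A ∩ B)) A X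
    · have := (IH _ A X hAc hXA hm v2 hM').replace hL (Subset.refl _) hXA
      rw [hu] at this
      exact hn this
    · obtain ⟨C, D, s1, hXC, hcc, hv, hm2⟩ := exists_min_viol hM'
      have hu1 := s1.union
      have hCD : A ∩ B ⊆ C ∨ A ∩ B ⊆ D := by
        by_contra hcon
        push Not at hcon
        obtain ⟨⟨x, hx, hxC⟩, ⟨y, hy, hyD⟩⟩ := And.imp not_subset.1 not_subset.1 hcon
        refine s1.nocross y (by grind) hyD x (by grind) hxC (Or.inr ⟨?_, hy, hx⟩)
        rintro rfl
        grind
      rcases hCD with hSC | hSD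
      · have e : (C ∪ B) ∩ D = C ∩ D := by grind
        refine hM (C ∪ B) D ⟨by grind, ?_⟩ (by grind) (by rw [e]; omega) ?_
        · intro a ha haD b hb hbC
          by_cases haC : a ∈ C
          · exact fun h => s1.nocross a haC haD b hb (by grind) (Or.inl h)
          · exact fun h => hs.nocross b (by grind) (by grind) a (by grind) (by grind) h.symm
        · rw [e]
          have key : ∀ a ∈ D \ (C ∩ D), ∀ b, (withClique G (A ∩ B)).Adj a b → G.Adj a b := by
            rintro a ha b (h | h)
            · exact h
            · grind
          exact viol_mono inter_subset_right inter_subset_right rfl (fun a ha b _ => key a ha b)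
            (fun a ha => dg_mono (Subset.refl _) (fun b _ => key a ha b)) hv
      · have hDc : D.card < U.card := (card_le_card (by grind)).trans_lt hAc
        have l1 := (IH _ D (C ∩ D) hDc inter_subset_right (by omega) hv hm2).replace hL (by grind)
          inter_subset_right
        have e : C ∩ (D ∪ B) = C ∩ D := by grind
        have hCA : C ⊂ A := by
          refine Finset.ssubset_iff_subset_ne.2 ⟨by grind, ?_⟩
          rintro rfl
          exact hv.ssubset (by grind)
        have hCc := card_lt_card hCA
        refine ih C.card (by omega) C (D ∪ B) le_rfl ⟨by grind, ?_⟩ hXC (by rw [e]; omega) ?_ ?_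
        · intro a ha haD b hb hbC
          by_cases hbD : b ∈ D
          · exact fun h => s1.nocross a ha (by grind) b hbD hbC (Or.inl h)
          · exact hs.nocross a (by grind) (by grind) b (by grind) (by grind)
        · rintro rfl
          omega
        · rwa [e]
  · obtain ⟨A1, B1, s1, hXA1, hSB, hlk, hmin⟩ :=
      exists_min_cut (G := G) hXA (inter_subset_left : A ∩ B ⊆ A)
    have hu1 := s1.union
    by_cases hge : X.card ≤ (A1 ∩ B1).card
    · have lk : Link G A X (A ∩ B) := menger _ G A X (A ∩ B) hXA inter_subset_left le_rfl
        fun A' B' h1 h2 h3 => hge.trans (hmin A' B' h1 h2 h3)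
      have := Linked.compose lk fun Y hY _ => hL.mono_set hY
      rw [hu] at this
      exact hn this
    · have e0 : B1 ∩ B = A ∩ B := by grind
      have lk : Linked L G (B1 ∪ B) (A1 ∩ B1) := by
        apply Linked.compose
        · rwa [e0]
        · intro Y hY _
          rw [e0] at hY
          exact hL.mono_set hY
      have e : A1 ∩ (B1 ∪ B) = A1 ∩ B1 := by grind
      have hCA : A1 ⊂ A := by
        refine Finset.ssubset_iff_subset_ne.2 ⟨by grind, ?_⟩
        rintro rfl
        have : A1 ∩ B ⊆ A1 ∩ B1 := by grind
        have := card_le_card this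
        omega
      have hCc := card_lt_card hCA
      refine ih A1.card (by omega) A1 (B1 ∪ B) le_rfl ⟨by grind, ?_⟩ hXA1 (by rw [e]; omega) ?_ ?_
      · intro a ha haD b hb hbC
        by_cases hbD : b ∈ B1
        · exact s1.nocross a ha (by grind) b hbD hbC
        · exact hs.nocross a (by grind) (by grind) b (by grind) (by grind)
      · rintro rfl
        omega
      · rwa [e]
/-- a minimal counterexample -/
structure Ctx (L : Type*) (m : ℕ) (G : SimpleGraph V) (U X : Finset V) : Prop where
  hX : X ⊆ U
  hm : X.card ≤ m
  hV : Viol (20 * m) G U X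
  hM : M2 (20 * m) G U X
  hn : ¬ Linked L G U X
  IH : ∀ (G' : SimpleGraph V) (U' X' : Finset V), U'.card < U.card → Good L m G' U' X'
  IH2 : ∀ (G' : SimpleGraph V), e2 G' U < e2 G U → Good L m G' U X

theorem Linked.mono {G G' : SimpleGraph V} {U U' X : Finset V} (h : Linked L G U X) (hU : U ⊆ U')
    (hG : ∀ a ∈ U, ∀ b ∈ U, G.Adj a b → G'.Adj a b) : Linked L G' U' X := by
  intro l
  obtain ⟨f, hf, hr⟩ := h l
  exact ⟨f, hf, fun x hx y hy hxy => (hr x hx y hy hxy).map fun a b hab ha hb hf _ =>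
    Reach.step (hG a ha b hb hab) (hU ha) (hU hb) hf⟩

variable {m : ℕ} {G : SimpleGraph V} {U X : Finset V}

theorem Ctx.rigid (c : Ctx L m G U X) {A B : Finset V} (hs : GSep G U A B) (hXA : X ⊆ A)
    (hc : (A ∩ B).card ≤ X.card) (hA : A ≠ U) (hl : Linked L G B (A ∩ B)) : False :=
  no_rigid c.IH c.hm c.hV c.hM c.hn _ A B le_rfl hs hXA hc hA hl

theorem Ctx.noviol (c : Ctx L m G U X) {A B : Finset V} (hs : GSep G U A B) (hXA : X ⊆ A)
    (hc : (A ∩ B).card ≤ X.card) (hXB : ¬ X ⊆ B) : ¬ Viol (20 * m) G B (A ∩ B) := by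
  intro hv
  have hu := hs.union
  have hX := c.hX
  have hm := c.hm
  have hB : B ⊂ U := Finset.ssubset_iff_subset_ne.2 ⟨by grind, by rintro rfl; exact hXB hX⟩
  refine c.rigid hs hXA hc ?_ ?_
  · intro h
    exact hv.ssubset (by rw [h]; exact hB.1)
  · exact c.IH G B (A ∩ B) (card_lt_card hB) inter_subset_right (by omega) hv
      (c.hM.inherit hs hXA hc)

theorem Ctx.delV (c : Ctx L m G U X) {v : V} (hv : v ∈ U) (hvX : v ∉ X) :
    20 * m + 1 ≤ dg G U v := by
  by_contra hcon
  have hX := c.hX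
  have hXU : X ⊆ U.erase v := by grind
  have hcard := card_erase_add_one hv
  have hins : insert v (U.erase v) = U := insert_erase hv
  have he := e2_insert G (notMem_erase v U)
  rw [hins] at he
  have hd : dg G (U.erase v) v ≤ dg G U v := dg_mono (erase_subset _ _) fun _ _ h => h
  have v1 : Viol (20 * m) G (U.erase v) X := by
    have := c.hV
    unfold Viol at *
    rw [← hcard, mul_add] at this
    omega
  have m2 : M2 (20 * m) G (U.erase v) X := by
    intro A B hs hXA hc hvi
    have hu := hs.union
    have hvA : v ∉ A := by grind
    have hvB : v ∉ B := by grind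
    have e : insert v A ∩ insert v B = insert v (A ∩ B) := by grind
    have hci : (insert v (A ∩ B)).card = (A ∩ B).card + 1 := card_insert_of_notMem (by grind)
    refine c.noviol (A := insert v A) (B := insert v B) ⟨by grind, ?_⟩ (by grind) (by rw [e]; omega)
      ?_ ?_
    · intro a ha ha' b hb hb'
      exact hs.nocross a (by grind) (by grind) b (by grind) (by grind)
    · intro h
      have : X ⊆ A ∩ B := by grind
      have := card_le_card this
      omega
    · rw [e]
      exact viol_mono inter_subset_right (by grind) (by grind) (fun a _ b _ h => h)
        (fun a _ => dg_mono (subset_insert _ _) fun _ _ h => h) hvi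
  exact c.hn ((c.IH G (U.erase v) X (by omega) hXU c.hm v1 m2).mono (erase_subset _ _)
    fun _ _ _ _ h => h)

theorem dg_le_add_one {G' : SimpleGraph V} {S : Finset V} {u v : V}
    (h : ∀ b ∈ S, G.Adj u b → b ≠ v → G'.Adj u b) : dg G S u ≤ dg G' S u + 1 := by
  unfold dg
  refine (card_le_card (t := insert v _) ?_).trans (card_insert_le _ _)
  intro b hb
  rw [mem_filter] at hb
  rw [mem_insert, mem_filter]
  by_cases hbv : b = v
  · exact Or.inl hbv
  · exact Or.inr ⟨hb.1, h b hb.1 hb.2 hbv⟩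

theorem e2_delete_le {u v : V} (hu : u ∈ U) :
    e2 G U ≤ e2 (G.deleteEdges {s(u, v)}) U + 2 := by
  have hins : insert u (U.erase u) = U := insert_erase hu
  have he := e2_insert G (notMem_erase u U)
  have he' := e2_insert (G.deleteEdges {s(u, v)}) (notMem_erase u U)
  rw [hins] at he he'
  have h1 : e2 G (U.erase u) ≤ e2 (G.deleteEdges {s(u, v)}) (U.erase u) := by
    apply e2_mono_graph
    intro a ha b hb hab
    rw [SimpleGraph.deleteEdges_adj]
    refine ⟨hab, ?_⟩
    simp only [Set.mem_singleton_iff, Sym2.eq_iff]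
    grind
  have h2 : dg G (U.erase u) u ≤ dg (G.deleteEdges {s(u, v)}) (U.erase u) u + 1 := by
    apply dg_le_add_one (v := v)
    intro b hb hub hbv
    rw [SimpleGraph.deleteEdges_adj]
    refine ⟨hub, ?_⟩
    simp only [Set.mem_singleton_iff, Sym2.eq_iff]
    grind
  omega

theorem Ctx.delE (c : Ctx L m G U X) {u v : V} (hu : u ∈ U) (huX : u ∉ X) (hv : v ∈ U)
    (hvX : v ∉ X) (huv : G.Adj u v) :
    e2 G U + 2 * (20 * m) * X.card ≤ e2 G X + 2 * (20 * m) * U.card + 2 := by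
  by_contra hcon
  have hle : ∀ a b, (G.deleteEdges {s(u, v)}).Adj a b → G.Adj a b :=
    fun a b h => (SimpleGraph.deleteEdges_le _) h
  have h1 := e2_delete_le (G := G) (v := v) hu
  have h2 : e2 (G.deleteEdges {s(u, v)}) X ≤ e2 G X := e2_mono_graph fun a _ b _ => hle a b
  have v1 : Viol (20 * m) (G.deleteEdges {s(u, v)}) U X := by
    unfold Viol
    omega
  have m2 : M2 (20 * m) (G.deleteEdges {s(u, v)}) U X := by
    intro A B hs hXA hc hvi
    have hun := hs.union
    by_cases hsG : GSep G U A B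
    · exact c.hM A B hsG hXA hc (viol_mono inter_subset_right inter_subset_right rfl
        (fun a _ b _ => hle a b) (fun a _ => dg_mono (Subset.refl _) fun b _ => hle a b) hvi)
    · obtain ⟨a, b, haA, haB, hbB, hbA, hab, hs2⟩ := exists_split_edge hs hsG
      have haX : a ∉ X := by
        rw [Sym2.eq_iff] at hs2
        grind
      have e : A ∩ insert a B = insert a (A ∩ B) := by grind
      have hci : (insert a (A ∩ B)).card = (A ∩ B).card + 1 := card_insert_of_notMem (by grind)
      refine c.noviol (A := A) (B := insert a B) ⟨by grind, ?_⟩ (by grind) (by rw [e]; omega)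
        ?_ ?_
      · intro x hx hx' y hy hy' hxy
        refine hs.nocross x hx (by grind) y (by grind) hy' ?_
        rw [SimpleGraph.deleteEdges_adj]
        refine ⟨hxy, ?_⟩
        rw [Set.mem_singleton_iff, ← hs2, Sym2.eq_iff]
        grind
      · intro h
        have : X ⊆ A ∩ B := by grind
        have := card_le_card this
        omega
      · rw [e]
        exact viol_mono inter_subset_right (by grind) (by grind) (fun a _ b _ => hle a b)
          (fun a _ => dg_mono (subset_insert _ _) fun b _ => hle a b) hvi
  exact c.hn ((c.IH2 _ (e2_delete_lt hu hv huv) c.hX c.hm v1 m2).mono (Subset.refl _)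
    fun a _ b _ => hle a b)

/-- contraction of `v` into `u` -/
def contr (G : SimpleGraph V) (u v : V) : SimpleGraph V where
  Adj a b := a ≠ b ∧ (G.Adj a b ∨ (a = u ∧ G.Adj v b) ∨ (b = u ∧ G.Adj v a))
  symm := ⟨fun a b h => ⟨h.1.symm, by
    rcases h.2 with h | h | h
    · exact Or.inl h.symm
    · exact Or.inr (Or.inr h)
    · exact Or.inr (Or.inl h)⟩⟩
  loopless := ⟨fun a h => h.1 rfl⟩

theorem Linked.pull {u v : V} {B S : Finset V} (h : Linked L (contr G u v) B S) (hS : S ⊆ B)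
    (hu : u ∈ B) (hv : v ∉ B) (huv : G.Adj u v) : Linked L G (insert v B) S := by
  intro l
  obtain ⟨f', hf', hr⟩ := h l
  let f : V → L := fun w => if w = v then f' u else f' w
  have fv : f v = f' u := by simp [f]
  have fB : ∀ w ∈ B, f w = f' w := fun w hw => by
    have : w ≠ v := by grind
    simp [f, this]
  refine ⟨f, fun x hx => by rw [fB x (hS hx), hf' x hx], ?_⟩
  intro x hx y hy hxy
  refine (hr x hx y hy hxy).map ?_
  intro a b hab ha hb hfab _
  have ha' := mem_insert_of_mem (b := v) ha
  have hb' := mem_insert_of_mem (b := v) hb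
  have hu' := mem_insert_of_mem (b := v) hu
  have hv' := mem_insert_self v B
  have huvr : Reach G (insert v B) f u v := Reach.step huv hu' hv' (by rw [fB u hu, fv])
  rcases hab.2 with h1 | ⟨rfl, h1⟩ | ⟨rfl, h1⟩
  · exact Reach.step h1 ha' hb' (by rw [fB a ha, fB b hb, hfab])
  · exact huvr.trans (Reach.step h1 hv' hb' (by rw [fv, fB b hb, hfab]))
  · exact (huvr.trans (Reach.step h1 hv' ha' (by rw [fv, fB a ha, hfab]))).symm
theorem contr_of_adj {G : SimpleGraph V} {u v a b : V} (h : G.Adj a b) : (contr G u v).Adj a b :=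
  ⟨h.ne, Or.inl h⟩

theorem adj_of_contr {G : SimpleGraph V} {u v a b : V} (h : (contr G u v).Adj a b) (ha : a ≠ u)
    (hb : b ≠ u) : G.Adj a b := by
  rcases h.2 with h | h | h
  · exact h
  · exact (ha h.1).elim
  · exact (hb h.1).elim

theorem dg_contr_le {G : SimpleGraph V} {u v t : V} {S : Finset V} (hv : v ∉ S) (ht : t ≠ u) :
    dg (contr G u v) S t ≤ dg G (insert v S) t := by
  by_cases hG : ∀ b ∈ S, (contr G u v).Adj t b → G.Adj t b
  · exact dg_mono (subset_insert _ _) hG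
  · push Not at hG
    obtain ⟨b, hb, hb1, hb2⟩ := hG
    have htv : G.Adj t v := by
      rcases hb1.2 with h | h | h
      · exact (hb2 h).elim
      · exact (ht h.1).elim
      · exact h.2.symm
    have h1 : dg (contr G u v) S t ≤ dg G S t + 1 := by
      apply dg_le_add_one (v := u)
      intro b _ hb hbu
      exact adj_of_contr hb ht hbu
    have h2 : dg G (insert v S) t = dg G S t + 1 := by
      unfold dg
      rw [filter_insert, if_pos htv, card_insert_of_notMem]
      simp [hv]
    omega

theorem Ctx.contract {m : ℕ} {G : SimpleGraph V} {U X : Finset V} (hm1 : 1 ≤ m)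
    (c : Ctx L m G U X) {u v : V} (hu : u ∈ U) (huX : u ∉ X) (hv : v ∈ U)
    (hvX : v ∉ X) (huv : G.Adj u v) :
    20 * m ≤ (U.filter (fun b => G.Adj u b ∧ G.Adj v b)).card := by
  by_contra hcon
  have hX := c.hX
  have hne : u ≠ v := huv.ne
  have hXU : X ⊆ U.erase v := by grind
  have huU : u ∈ U.erase v := by grind
  have hcard := card_erase_add_one hv
  have hlt : (U.erase v).card < U.card := by omega
  have v1 : Viol (20 * m) (contr G u v) (U.erase v) X := by
    have a1 : insert v (U.erase v) = U := insert_erase hv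
    have a2 : insert u ((U.erase v).erase u) = U.erase v := insert_erase huU
    have b1 := e2_insert G (notMem_erase v U)
    have b2 := e2_insert G (notMem_erase u (U.erase v))
    have b3 := e2_insert (contr G u v) (notMem_erase u (U.erase v))
    rw [a1] at b1
    rw [a2] at b2 b3
    set W := (U.erase v).erase u with hW
    have c1 : e2 G W ≤ e2 (contr G u v) W := e2_mono_graph fun a _ b _ h => contr_of_adj h
    have c2 : e2 (contr G u v) X ≤ e2 G X := e2_mono_graph fun a ha b hb h =>
      adj_of_contr h (by grind) (by grind)
    have c3 : dg G (U.erase v) v = dg G W v + 1 := by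
      rw [← a2]
      unfold dg
      rw [filter_insert, if_pos huv.symm, card_insert_of_notMem]
      simp [hW]
    have c4 : dg G W u + dg G W v ≤ dg (contr G u v) W u +
        (U.filter (fun b => G.Adj u b ∧ G.Adj v b)).card := by
      unfold dg
      rw [← card_union_add_card_inter]
      apply Nat.add_le_add <;> apply card_le_card
      · intro b hb
        simp only [mem_union, mem_filter] at hb ⊢
        have hbW : b ∈ W := by grind
        refine ⟨hbW, by grind, ?_⟩
        grind
      · intro b hb
        simp only [mem_inter, mem_filter] at hb ⊢
        grind
    have := c.hV
    unfold Viol at *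
    rw [← hcard, mul_add] at this
    omega
  by_cases m2 : M2 (20 * m) (contr G u v) (U.erase v) X
  · have := (c.IH _ _ X hlt hXU c.hm v1 m2).pull hXU huU (notMem_erase v U) huv
    rw [insert_erase hv] at this
    exact c.hn this
  · obtain ⟨A, B, hs, hXA, hc, hvi, hm2⟩ := exists_min_viol m2
    have hun := hs.union
    have hm := c.hm
    have hvA : v ∉ A := by grind
    have hvB : v ∉ B := by grind
    have hBc : B.card < U.card := (card_le_card (by grind)).trans_lt hlt
    have hl := c.IH _ B (A ∩ B) hBc inter_subset_right (by omega) hvi hm2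
    have nc : ∀ a ∈ A, a ∉ B → ∀ b ∈ B, b ∉ A → ¬ G.Adj a b := fun a ha ha' b hb hb' h =>
      hs.nocross a ha ha' b hb hb' (contr_of_adj h)
    by_cases huA : u ∈ A
    · by_cases huB : u ∈ B
      · have e : insert v A ∩ insert v B = insert v (A ∩ B) := by grind
        have hci : (insert v (A ∩ B)).card = (A ∩ B).card + 1 := card_insert_of_notMem (by grind)
        refine c.noviol (A := insert v A) (B := insert v B) ⟨by grind, ?_⟩ (by grind)
          (by rw [e]; omega) ?_ ?_
        · intro a ha ha' b hb hb'
          exact nc a (by grind) (by grind) b (by grind) (by grind)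
        · intro h
          have : X ⊆ A ∩ B := by grind
          have := card_le_card this
          omega
        · rw [e]
          refine viol_mono inter_subset_right (by grind) (by grind)
            (fun a ha b hb h => adj_of_contr h (by grind) (by grind))
            (fun a ha => dg_contr_le (by grind) (by grind)) hvi
      · have e : insert v A ∩ B = A ∩ B := by grind
        refine c.rigid (A := insert v A) (B := B) ⟨by grind, ?_⟩ (by grind) (by rw [e]; omega) ?_ ?_
        · intro a ha ha' b hb hb' hab
          by_cases hav : a = v
          · subst hav
            exact hs.nocross u huA huB b hb (by grind) ⟨by grind, Or.inr (Or.inl ⟨rfl, hab⟩)⟩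
          · exact nc a (by grind) ha' b hb (by grind) hab
        · intro h
          apply hvi.ssubset
          grind
        · rw [e]
          exact hl.mono (Subset.refl _) fun a ha b hb h => adj_of_contr h (by grind) (by grind)
    · have huB : u ∈ B := by grind
      have e : A ∩ insert v B = A ∩ B := by grind
      refine c.rigid (A := A) (B := insert v B) ⟨by grind, ?_⟩ hXA (by rw [e]; omega)
        (by grind) ?_
      · intro a ha ha' b hb hb' hab
        by_cases hbv : b = v
        · subst hbv
          exact hs.nocross a ha (by grind) u huB huA
            ⟨by grind, Or.inr (Or.inr ⟨rfl, hab.symm⟩)⟩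
        · exact nc a ha (by grind) b (by grind) hb' hab
      · rw [e]
        exact hl.pull inter_subset_right huB hvB huv

theorem Ctx.false {m : ℕ} {G : SimpleGraph V} {U X : Finset V} (hm1 : 1 ≤ m)
    (c : Ctx L m G U X) : False := by
  have hX := c.hX
  have hm := c.hm
  set Y := U \ X with hY
  have hdY : ∀ v ∈ Y, 19 * m + 1 ≤ dg G Y v := by
    intro v hv
    have h1 := c.delV (v := v) (by grind) (by grind)
    have h2 := dg_sdiff G (D := U) (J := X) v
    rw [← hY] at h2
    omega
  have hV := c.hV
  have hYne : Y.Nonempty := by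
    rw [nonempty_iff_ne_empty]
    intro h
    rw [viol_iff hX, ← hY, h] at hV
    simp [e2] at hV
  -- low degree vertex
  have ⟨v, hvY, hvd⟩ : ∃ v ∈ Y, dg G Y v ≤ 40 * m + 2 := by
    obtain ⟨v, hv⟩ := hYne
    have h1 := hdY v hv
    obtain ⟨w, hw⟩ : (Y.filter (fun b => G.Adj v b)).Nonempty :=
      card_pos.1 (by unfold dg at h1; omega)
    rw [mem_filter] at hw
    have h2 := c.delE (u := v) (v := w) (by grind) (by grind) (by grind) (by grind) hw.2
    have h3 := e2_split G hX
    rw [← hY] at h3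
    have h4 := card_sdiff_add_card_eq_card hX
    rw [← hY] at h4
    by_contra hcon
    push Not at hcon
    have h5 : Y.card * (40 * m + 3) ≤ e2 G Y := by
      unfold e2
      rw [← smul_eq_mul]
      exact card_nsmul_le_sum _ _ _ fun x hx => hcon x hx
    have h6 : 0 < Y.card := card_pos.2 ⟨v, hv⟩
    have h7 : Y.card * (40 * m + 3) = 2 * (20 * m) * Y.card + 3 * Y.card := by ring
    rw [← h4, mul_add] at h2
    omega
  set D := insert v (Y.filter (fun b => G.Adj v b)) with hD
  have hDY : D ⊆ Y := by grind
  have hD1 : D.card ≤ 40 * m + 3 := by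
    have := card_insert_le v (Y.filter (fun b => G.Adj v b))
    rw [← hD] at this
    unfold dg at hvd
    omega
  have hD2 : ∀ x ∈ D, 19 * m + 1 ≤ dg G D x := by
    intro x hx
    by_cases hxv : x = v
    · subst hxv
      refine (hdY x hvY).trans (card_le_card ?_)
      intro b hb
      simp only [mem_filter] at hb ⊢
      exact ⟨by grind, hb.2⟩
    · have hvx : G.Adj v x := by grind
      have h1 := c.contract hm1 (u := v) (v := x) (by grind) (by grind) (by grind) (by grind) hvx
      have h2 : U.filter (fun b => G.Adj v b ∧ G.Adj x b) ⊆
          X ∪ (Y.filter (fun b => G.Adj v b ∧ G.Adj x b)) := by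
        intro b hb
        simp only [mem_filter, mem_union] at hb ⊢
        grind
      have h3 := (card_le_card h2).trans (card_union_le _ _)
      have h4 : insert v (Y.filter (fun b => G.Adj v b ∧ G.Adj x b)) ⊆
          D.filter (fun b => G.Adj x b) := by
        intro b hb
        simp only [mem_filter, mem_insert] at hb ⊢
        rcases hb with rfl | hb
        · exact ⟨by grind, hvx.symm⟩
        · exact ⟨by grind, hb.2.2⟩
      have h5 := card_le_card h4
      rw [card_insert_of_notMem (by simp)] at h5
      unfold dg
      omega
  obtain ⟨D', hD', hcD, hR⟩ := exists_robust hm1 ⟨v, mem_insert_self _ _⟩ hD1 hD2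
  have hD'U : D' ⊆ U := by grind
  obtain ⟨A, B, hs, hXA, hDB, hlk, hmin⟩ := exists_min_cut (G := G) hX hD'U
  have hord : (A ∩ B).card ≤ X.card := by
    have := hmin X U ⟨by grind, by grind⟩ (Subset.refl _) hD'U
    rwa [inter_eq_left.2 hX] at this
  have hun := hs.union
  have e : B ∩ D' = D' := by grind
  have hl : Linked L G (B ∪ D') (A ∩ B) := by
    apply Linked.compose
    · rwa [e]
    · intro Z hZ hZc
      rw [e] at hZ
      exact hR.linked hZ (by omega)
  rw [union_eq_left.2 hDB] at hl
  refine c.rigid hs hXA hord ?_ hl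
  rintro rfl
  have : D' ⊆ A ∩ B := by grind
  have := card_le_card this
  omega

theorem good_all {m : ℕ} (hm1 : 1 ≤ m) : ∀ (n : ℕ) (G : SimpleGraph V) (U X : Finset V),
    U.card ≤ n → Good L m G U X := by
  intro n
  induction n using Nat.strong_induction_on with
  | _ n ih =>
  have key : ∀ (e : ℕ) (G : SimpleGraph V) (U X : Finset V), U.card ≤ n → e2 G U ≤ e →
      Good L m G U X := by
    intro e
    induction e using Nat.strong_induction_on with
    | _ e ih2 =>
    intro G U X hU he hX hm hV hM
    by_contra hn
    exact Ctx.false hm1 (L := L) (G := G) (U := U) (X := X) ⟨hX, hm, hV, hM, hn,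
      fun G' U' X' h => ih U'.card (by omega) G' U' X' le_rfl,
      fun G' h => ih2 (e2 G' U) (by omega) G' U X hU le_rfl⟩
  intro G U X hU
  exact key _ G U X hU le_rfl
theorem mader {m : ℕ} (hm1 : 1 ≤ m) [Fintype V] [Nonempty V] (G : SimpleGraph V)
    (h : 44 * m * Fintype.card V ≤ e2 G univ) :
    ∃ U : Finset V, 22 * m ≤ U.card ∧ (∀ v ∈ U, 22 * m + 1 ≤ dg G U v) ∧
      ∀ X, X ⊆ U → X.card ≤ m → Viol (20 * m) G U X ∧ M2 (20 * m) G U X := by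
  let Q : Finset V → Prop := fun U => 22 * m ≤ U.card ∧
    44 * m * U.card < e2 G U + 44 * m * m
  let P : ℕ → Prop := fun n => ∃ U : Finset V, Q U ∧ U.card = n
  have hP : ∃ n, P n := by
    refine ⟨_, univ, ⟨?_, ?_⟩, rfl⟩
    · have h1 := h.trans (e2_le G univ)
      rw [card_univ] at *
      have h2 : 0 < Fintype.card V := Fintype.card_pos
      have := Nat.le_of_mul_le_mul_right h1 h2
      omega
    · rw [card_univ]
      have : 0 < 44 * m * m := by positivity
      omega
  obtain ⟨U, ⟨hU1, hU2⟩, hc⟩ := Nat.find_spec hP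
  have hmin : ∀ U', Q U' → U.card ≤ U'.card := by
    intro U' h
    rw [hc]
    exact Nat.find_min' hP ⟨U', h, rfl⟩
  have hU3 : 22 * m + 1 ≤ U.card := by
    by_contra hcon
    have e : U.card = 22 * m := by omega
    have := e2_le G U
    rw [e] at this hU2
    nlinarith
  have hdeg : ∀ v ∈ U, 22 * m + 1 ≤ dg G U v := by
    intro v hv
    by_contra hcon
    have hcard := card_erase_add_one hv
    have he := e2_insert G (notMem_erase v U)
    rw [insert_erase hv] at he
    have hd : dg G (U.erase v) v ≤ dg G U v := dg_mono (erase_subset _ _) fun _ _ h => h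
    have := hmin (U.erase v) ⟨by omega, by
      rw [← hcard, mul_add] at hU2
      omega⟩
    omega
  have hsep : ∀ A B, GSep G U A B → (A ∩ B).card < m → ¬ A ⊆ B → ¬ B ⊆ A → False := by
    intro A B hs ho hAB hBA
    have hu := hs.union
    obtain ⟨a, haA, haB⟩ := not_subset.1 hAB
    obtain ⟨b, hbB, hbA⟩ := not_subset.1 hBA
    have cA : 22 * m + 1 ≤ A.card := by
      refine (hdeg a (by grind)).trans (card_le_card ?_)
      intro x hx
      simp only [mem_filter] at hx
      by_contra hxA
      exact hs.nocross a haA haB x (by grind) hxA hx.2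
    have cB : 22 * m + 1 ≤ B.card := by
      refine (hdeg b (by grind)).trans (card_le_card ?_)
      intro x hx
      simp only [mem_filter] at hx
      by_contra hxB
      exact hs.nocross x (by grind) hxB b hbB hbA hx.2.symm
    have lA : A.card < U.card := card_lt_card
      (Finset.ssubset_iff_subset_ne.2 ⟨by grind, by rintro rfl; grind⟩)
    have lB : B.card < U.card := card_lt_card
      (Finset.ssubset_iff_subset_ne.2 ⟨by grind, by rintro rfl; grind⟩)
    have qA : ¬ Q A := fun h => by have := hmin A h; omega
    have qB : ¬ Q B := fun h => by have := hmin B h; omega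
    have qA' : e2 G A + 44 * m * m ≤ 44 * m * A.card := by
      by_contra hcon
      exact qA ⟨by omega, by omega⟩
    have qB' : e2 G B + 44 * m * m ≤ 44 * m * B.card := by
      by_contra hcon
      exact qB ⟨by omega, by omega⟩
    have h1 := e2_sep hs
    have h2 := card_sep hs
    have h3 : 44 * m * (A ∩ B).card ≤ 44 * m * m := Nat.mul_le_mul_left _ ho.le
    have h4 : 44 * m * (U.card + (A ∩ B).card) = 44 * m * (A.card + B.card) := by rw [h2]
    rw [mul_add, mul_add] at h4
    omega
  refine ⟨U, hU1, hdeg, ?_⟩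
  intro X hX hXm
  constructor
  · have h1 := e2_le G X
    have h2 : X.card * X.card ≤ m * X.card := Nat.mul_le_mul_right _ hXm
    unfold Viol
    nlinarith
  · intro A B hs hXA ho hv
    have h1 := hv.ssubset
    by_cases hAB : A ⊆ B
    · have : X ⊆ A ∩ B := by grind
      have := card_le_card this
      omega
    · exact hsep A B hs (by omega) hAB h1

theorem Reach.walk {G : SimpleGraph V} {U : Finset V} {f : V → L} {x y : V}
    (h : Reach G U f x y) : ∃ p : G.Walk x y, ∀ z ∈ p.support, f z = f x := by
  induction h with
  | refl => exact ⟨SimpleGraph.Walk.nil, by simp⟩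
  | tail h1 h2 ih =>
    obtain ⟨p, hp⟩ := ih
    refine ⟨p.concat h2.1, ?_⟩
    intro z hz
    rw [SimpleGraph.Walk.support_concat, List.mem_append] at hz
    rcases hz with hz | hz
    · exact hp z hz
    · rw [List.mem_singleton] at hz
      rw [hz, ← h2.2.2.2]
      exact (Reach.label h1).symm

/-- building the subdivision from a labelled path system -/
theorem subdiv_of_paths {W : Type*} [Finite W] {G : SimpleGraph V} {H : SimpleGraph W} {b : W → V}
    {f : V → W ⊕ Sym2 W} (hb : Function.Injective b) (hf : ∀ w, f (b w) = Sum.inl w)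
    (hp : ∀ i j, H.Adj i j → ∃ p : G.Walk (b i) (b j), ∀ z ∈ p.support,
      z = b i ∨ z = b j ∨ f z = Sum.inr s(i, j)) : HasSubdiv G H := by
  have hp' : ∀ i j, H.Adj i j → ∃ p : G.Walk (b i) (b j), p.IsPath ∧ ∀ z ∈ p.support,
      z = b i ∨ z = b j ∨ f z = Sum.inr s(i, j) := by
    intro i j hij
    obtain ⟨p, hp⟩ := hp i j hij
    exact ⟨p.bypass, p.bypass_isPath, fun z hz => hp z (p.support_bypass_subset hz)⟩
  choose P0 hP0 hS0 using hp'
  obtain ⟨n, ⟨r⟩⟩ := Finite.exists_equiv_fin W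
  let P : ∀ ⦃i j : W⦄, H.Adj i j → G.Walk (b i) (b j) := fun i j h =>
    if r i < r j then P0 i j h else (P0 j i h.symm).reverse
  have hS : ∀ i j (h : H.Adj i j), ∀ z ∈ (P h).support,
      z = b i ∨ z = b j ∨ f z = Sum.inr s(i, j) := by
    intro i j h z hz
    by_cases hr : r i < r j
    · simp only [P, if_pos hr] at hz
      exact hS0 i j h z hz
    · simp only [P, if_neg hr, SimpleGraph.Walk.support_reverse, List.mem_reverse] at hz
      have := hS0 j i h.symm z hz
      rw [Sym2.eq_swap]
      tauto
  refine ⟨b, P, hb, ?_, ?_, ?_, ?_⟩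
  · intro i j h
    by_cases hr : r i < r j
    · simp only [P, if_pos hr]
      exact hP0 i j h
    · simp only [P, if_neg hr]
      exact (hP0 j i h.symm).reverse
  · intro i j h
    have hne : r i ≠ r j := fun e => h.ne (r.injective e)
    by_cases hr : r i < r j
    · simp only [P, if_pos hr, if_neg hr.le.not_gt]
    · have hr' : r j < r i := lt_of_le_of_ne (not_lt.1 hr) hne.symm
      simp only [P, if_pos hr', if_neg hr, SimpleGraph.Walk.reverse_reverse]
  · intro i j h k hk
    rcases hS i j h _ hk with h1 | h1 | h1
    · exact Or.inl (hb h1)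
    · exact Or.inr (hb h1)
    · rw [hf] at h1
      cases h1
  · intro i j hij k l hkl hne v hv hv'
    have h1 := hS i j hij v hv
    have h2 := hS k l hkl v hv'
    grind

theorem subdiv_main {W : Type*} [Fintype V] [Fintype W] [Nonempty V] [Nonempty W]
    (H : SimpleGraph W) (G : SimpleGraph V) {m : ℕ} (hm1 : 1 ≤ m)
    (hmc : Fintype.card W + Fintype.card H.Dart ≤ m)
    (h : 44 * m * Fintype.card V ≤ e2 G univ) : HasSubdiv G H := by
  obtain ⟨U, hU, hdeg, hX⟩ := mader hm1 G h
  obtain ⟨b0⟩ : Nonempty (W ↪ U) := Function.Embedding.nonempty_of_card_le (by simp; omega)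
  let b : W → V := fun w => (b0 w : V)
  have hb : Function.Injective b := fun x y h => b0.injective (Subtype.ext h)
  have hbU : ∀ w, b w ∈ U := fun w => (b0 w).2
  let t : H.Dart → Finset V := fun d => (U.filter (fun x => G.Adj (b d.fst) x)) \ univ.image b
  have htc : ∀ d, m ≤ (t d).card := by
    intro d
    have h1 := hdeg _ (hbU d.fst)
    unfold dg at h1
    have h2 := le_card_sdiff (univ.image b) (U.filter (fun x => G.Adj (b d.fst) x))
    have h3 : (univ.image b).card ≤ Fintype.card W := card_image_le
    change m ≤ ((U.filter (fun x => G.Adj (b d.fst) x)) \ univ.image b).card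
    omega
  obtain ⟨c, hc, hct⟩ := (Finset.all_card_le_biUnion_card_iff_exists_injective t).1 (by
    intro s
    rcases s.eq_empty_or_nonempty with rfl | ⟨d, hd⟩
    · simp
    · have h1 : s.card ≤ Fintype.card H.Dart := card_le_univ s
      have h2 := card_le_card (subset_biUnion_of_mem t hd)
      have h3 := htc d
      omega)
  have hcU : ∀ d, c d ∈ U := fun d => by
    have := hct d
    simp only [t, mem_sdiff, mem_filter] at this
    exact this.1.1
  have hcA : ∀ d, G.Adj (b d.fst) (c d) := fun d => by
    have := hct d
    simp only [t, mem_sdiff, mem_filter] at this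
    exact this.1.2
  have hcb : ∀ w d, b w ≠ c d := fun w d e => by
    have := hct d
    simp only [t, mem_sdiff] at this
    exact this.2 (mem_image.2 ⟨w, mem_univ _, e⟩)
  let g : W ⊕ H.Dart → V := Sum.elim b c
  have hg : Function.Injective g := hb.sumElim hc hcb
  let lab : W ⊕ H.Dart → W ⊕ Sym2 W := Sum.map id SimpleGraph.Dart.edge
  obtain ⟨w0⟩ := ‹Nonempty W›
  let l : V → W ⊕ Sym2 W := Function.extend g lab (fun _ => Sum.inl w0)
  have hl : ∀ s, l (g s) = lab s := fun s => hg.extend_apply _ _ _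
  let X : Finset V := univ.image g
  have hgX : ∀ s, g s ∈ X := fun s => mem_image_of_mem _ (mem_univ _)
  have hXU : X ⊆ U := by
    intro x hx
    obtain ⟨s, _, rfl⟩ := mem_image.1 hx
    rcases s with w | d
    · exact hbU w
    · exact hcU d
  have hXm : X.card ≤ m := by
    refine card_image_le.trans ?_
    rw [card_univ, Fintype.card_sum]
    exact hmc
  obtain ⟨hV, hM⟩ := hX X hXU hXm
  obtain ⟨f, hf, hr⟩ := good_all (L := W ⊕ Sym2 W) hm1 _ G U X le_rfl hXU hXm hV hM l
  refine subdiv_of_paths (f := f) hb (fun w => ?_) ?_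
  · exact (hf _ (hgX (Sum.inl w))).trans (hl _)
  · intro i j hij
    let d : H.Dart := ⟨(i, j), hij⟩
    have hlab : l (g (Sum.inr d)) = l (g (Sum.inr d.symm)) := by
      rw [hl, hl]
      simp [lab]
    obtain ⟨p, hp⟩ := (hr _ (hgX (Sum.inr d)) _ (hgX (Sum.inr d.symm)) hlab).walk
    have e1 : f (g (Sum.inr d)) = Sum.inr s(i, j) := (hf _ (hgX _)).trans (hl _)
    have a1 : G.Adj (b i) (g (Sum.inr d)) := hcA d
    have a2 : G.Adj (g (Sum.inr d.symm)) (b j) := (hcA d.symm).symm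
    refine ⟨SimpleGraph.Walk.cons a1 (p.concat a2), ?_⟩
    intro z hz
    rw [SimpleGraph.Walk.support_cons, List.mem_cons, SimpleGraph.Walk.support_concat, List.mem_append,
      List.mem_singleton] at hz
    rcases hz with hz | hz | hz
    · exact Or.inl hz
    · exact Or.inr (Or.inr ((hp z hz).trans e1))
    · exact Or.inr (Or.inl hz)

end SubdivAux

theorem statement_17 {V W : Type*} [Fintype V] [Fintype W]
    (H : SimpleGraph W) (G : SimpleGraph V) (p q : Nat)
    (hp : Nat.card W = p) (hq : H.edgeSet.ncard = q)
    (hdeg : (88 * ((p : Real) + (q : Real))) ≤ avgDeg G) :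
    HasSubdiv G H := by
  classical
  rcases isEmpty_or_nonempty W with hW | hW
  · exact ⟨fun w => isEmptyElim w, fun i => isEmptyElim i, fun i => isEmptyElim i,
      fun i => isEmptyElim i, fun i => isEmptyElim i, fun i => isEmptyElim i,
      fun i => isEmptyElim i⟩
  have hp' : Fintype.card W = p := by rw [← hp, Nat.card_eq_fintype_card]
  have hp1 : 1 ≤ p := by rw [← hp']; exact Fintype.card_pos
  have hd : Fintype.card H.Dart = 2 * q := by
    rw [H.dart_card_eq_twice_card_edges, ← hq, ← SimpleGraph.coe_edgeFinset, Set.ncard_coe_finset]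
  have hpR : (1 : ℝ) ≤ p := by exact_mod_cast hp1
  have hqR : (0 : ℝ) ≤ q := Nat.cast_nonneg q
  have hV : Nonempty V := by
    by_contra hV
    rw [not_nonempty_iff] at hV
    unfold avgDeg at hdeg
    simp at hdeg
    linarith
  refine subdiv_main H G (m := p + 2 * q) (by omega) (by omega) ?_
  have hn : (0 : ℝ) < Nat.card V := by exact_mod_cast Nat.card_pos
  unfold avgDeg at hdeg
  rw [le_div_iff₀ hn, finsum_eq_sum_of_fintype] at hdeg
  have he : ((e2 G Finset.univ : ℕ) : ℝ) = ∑ v : V, ((G.neighborSet v).ncard : ℝ) := by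
    unfold e2 dg
    push_cast
    refine Finset.sum_congr rfl fun v _ => ?_
    congr 1
    rw [← Set.ncard_coe_finset]
    congr 1
    ext x
    simp
  have hfin : ((44 * (p + 2 * q) * Fintype.card V : ℕ) : ℝ) ≤ (e2 G Finset.univ : ℕ) := by
    rw [he]
    refine le_trans ?_ hdeg
    rw [Nat.card_eq_fintype_card] at *
    push_cast
    refine mul_le_mul_of_nonneg_right ?_ hn.le
    linarith
  exact_mod_cast hfin
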